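/- arXiv:2210.11627 — 2 statements merged into one kernel-verified Lean document; each statement's English description precedes it below -/
import Mathlib

section
/- For a median voter scheme f^α with fixed ballots α_1 ≤ ... ≤ α_{n-1} on the ordered alternative set X = {a, a+1, ..., b}, the option set of any preference P_i is: {t(P_i), ..., α_{n-1}} if t(P_i) < α_1; {α_1, ..., α_{n-1}} if α_1 ≤ t(P_i) ≤ α_{n-1}; and {α_1, ..., t(P_i)} if t(P_i) > α_{n-1}. -/
/-- A preference profile: each agent `i : Fin n` has a strict preference,
modeled as a linear order on the set of alternatives `X`. -/
abbrev Profile (n : ℕ) (X : Type*) := Fin n → LinearOrder X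

/-- The top (best) alternative of a preference `L`. -/
noncomputable def top {X : Type*} [Fintype X] [Nonempty X] (L : LinearOrder X) : X :=
  @Finset.max' X L Finset.univ Finset.univ_nonempty

/-- `x` is strictly preferred to `y` according to `L`. -/
def prefers {X : Type*} (L : LinearOrder X) (x y : X) : Prop := L.lt y x

/-- The option set left open by preference `L` of agent `i` at rule `f`. -/
def OptionSet {n : ℕ} {X : Type*} (f : Profile n X → X) (i : Fin n) (L : LinearOrder X) :
    Set X :=
  {x | ∃ P : Profile n X, P i = L ∧ f P = x}

/-- `Li'` is a profitable manipulation of `f` at (true preference) `Li` for agent `i`. -/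
def IsManip {n : ℕ} {X : Type*} (f : Profile n X → X) (i : Fin n)
    (Li Li' : LinearOrder X) : Prop :=
  ∃ P : Profile n X, P i = Li ∧ prefers Li (f (Function.update P i Li')) (f P)

/-- The worst element of `O(Li')` is strictly `Li`-preferred to the worst element of `O(Li)`.
For nonempty finite option sets this is equivalent to: some element of `O(Li)` is strictly
worse (w.r.t. `Li`) than every element of `O(Li')`. -/
def WorstImproves {n : ℕ} {X : Type*} (f : Profile n X → X) (i : Fin n)
    (Li Li' : LinearOrder X) : Prop :=
  ∃ w ∈ OptionSet f i Li, ∀ w' ∈ OptionSet f i Li', prefers Li w' w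

/-- The best element of `O(Li')` is strictly `Li`-preferred to the best element of `O(Li)`.
For nonempty finite option sets this is equivalent to: some element of `O(Li')` is strictly
better (w.r.t. `Li`) than every element of `O(Li)`. -/
def BestImproves {n : ℕ} {X : Type*} (f : Profile n X → X) (i : Fin n)
    (Li Li' : LinearOrder X) : Prop :=
  ∃ b' ∈ OptionSet f i Li', ∀ b ∈ OptionSet f i Li, prefers Li b' b

/-- `Li'` is an obvious manipulation of `f` at `Li` for agent `i`. -/
def IsObviousManip {n : ℕ} {X : Type*} (f : Profile n X → X) (i : Fin n)
    (Li Li' : LinearOrder X) : Prop :=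
  IsManip f i Li Li' ∧ (WorstImproves f i Li Li' ∨ BestImproves f i Li Li')

/-- `f` is not obviously manipulable. -/
def NOM {n : ℕ} {X : Type*} (f : Profile n X → X) : Prop :=
  ∀ (i : Fin n) (Li Li' : LinearOrder X), ¬ IsObviousManip f i Li Li'

/-- `f` is tops-only. -/
def TopsOnly {n : ℕ} {X : Type*} [Fintype X] [Nonempty X] (f : Profile n X → X) : Prop :=
  ∀ P P' : Profile n X, (∀ i, top (P i) = top (P' i)) → f P = f P'

/-- The set `V_i` of alternatives that agent `i` vetoes via some preference. -/
def VetoSet {n : ℕ} {X : Type*} (f : Profile n X → X) (i : Fin n) : Set X :=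
  {x | ∃ L : LinearOrder X, x ∉ OptionSet f i L}

/-- The set `SV_i` of alternatives strongly vetoed by agent `i`:
`x` is vetoed via `L` precisely when the top of `L` differs from `x`. -/
def StrongVetoSet {n : ℕ} {X : Type*} [Fintype X] [Nonempty X]
    (f : Profile n X → X) (i : Fin n) : Set X :=
  {x | ∀ L : LinearOrder X, x ∉ OptionSet f i L ↔ top L ≠ x}

/-- `f` is dictatorial: some agent's top alternative is always selected. -/
def Dictatorial {n : ℕ} {X : Type*} [Fintype X] [Nonempty X]
    (f : Profile n X → X) : Prop :=
  ∃ i : Fin n, ∀ P : Profile n X, f P = top (P i)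

/-- The ordered set of alternatives `X = {a, a+1, ..., b} ⊆ ℕ`. -/
abbrev Alt (a b : ℕ) : Type := {x : ℕ // x ∈ Finset.Icc a b}

/-- The median of a multiset (w.r.t. the canonical linear order), with default `d`;
for a multiset of odd cardinality `2n-1` this is the usual median. -/
def medianOf {Y : Type*} [LinearOrder Y] (d : Y) (s : Multiset Y) : Y :=
  (s.sort (· ≤ ·)).getD (s.card / 2) d

/-- The median voter scheme with fixed ballots `α_1, ..., α_{n-1}`: it selects the median
of the `n` tops and the `n-1` fixed ballots. -/
noncomputable def medianScheme {n a b : ℕ} [Nonempty (Alt a b)]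
    (α : Fin (n - 1) → Alt a b) (P : Profile n (Alt a b)) : Alt a b :=
  medianOf (Classical.arbitrary (Alt a b))
    (Multiset.map (fun i => top (P i)) Finset.univ.val +
      Multiset.map α Finset.univ.val)

theorem med_le {Y : Type*} [LinearOrder Y] (d x : Y) (s u : Multiset Y) (k : ℕ)
    (hs : s.card = 2 * k + 1) (hu : u ≤ s) (hc : k + 1 ≤ u.card) (hx : ∀ y ∈ u, y ≤ x) :
    medianOf d s ≤ x := by
  unfold medianOf
  have hk : s.card / 2 = k := by omega
  have hlen : (s.sort (· ≤ ·)).length = 2 * k + 1 := by simp [hs]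
  have hsort : (s.sort (· ≤ ·)).Pairwise (· ≤ ·) := Multiset.pairwise_sort _ _
  have hcount : k + 1 ≤ (s.sort (· ≤ ·)).countP (fun y => decide (y ≤ x)) := by
    have h1 : u.countP (· ≤ x) ≤ s.countP (· ≤ x) := Multiset.countP_le_of_le _ hu
    have h2 : u.countP (· ≤ x) = u.card := Multiset.countP_eq_card.2 hx
    have h3 : s.countP (· ≤ x) = (s.sort (· ≤ ·)).countP (fun y => decide (y ≤ x)) := by
      conv_lhs => rw [← Multiset.sort_eq s (· ≤ ·)]
      exact Multiset.coe_countP _ _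
    omega
  rw [hk]
  generalize s.sort (· ≤ ·) = l at *
  rw [List.getD_eq_getElem _ _ (by omega)]
  by_contra hlt
  push Not at hlt
  rw [← List.take_append_drop k l, List.countP_append] at hcount
  have h1 : (l.take k).countP (fun y => decide (y ≤ x)) ≤ k :=
    List.countP_le_length.trans (by simp)
  have h2 : (l.drop k).countP (fun y => decide (y ≤ x)) = 0 := by
    rw [List.countP_eq_zero]
    intro y hy
    obtain ⟨j, hj, rfl⟩ := List.getElem_of_mem hy
    simp only [List.getElem_drop, decide_eq_true_eq, not_le]
    refine lt_of_lt_of_le hlt ?_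
    exact hsort.sortedLE.getElem_le_getElem_of_le (by omega)
  omega

theorem le_med {Y : Type*} [LinearOrder Y] (d x : Y) (s u : Multiset Y) (k : ℕ)
    (hs : s.card = 2 * k + 1) (hu : u ≤ s) (hc : k + 1 ≤ u.card) (hx : ∀ y ∈ u, x ≤ y) :
    x ≤ medianOf d s := by
  unfold medianOf
  have hk : s.card / 2 = k := by omega
  have hlen : (s.sort (· ≤ ·)).length = 2 * k + 1 := by simp [hs]
  have hsort : (s.sort (· ≤ ·)).Pairwise (· ≤ ·) := Multiset.pairwise_sort _ _
  have hcount : k + 1 ≤ (s.sort (· ≤ ·)).countP (fun y => decide (x ≤ y)) := by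
    have h1 : u.countP (x ≤ ·) ≤ s.countP (x ≤ ·) := Multiset.countP_le_of_le _ hu
    have h2 : u.countP (x ≤ ·) = u.card := Multiset.countP_eq_card.2 hx
    have h3 : s.countP (x ≤ ·) = (s.sort (· ≤ ·)).countP (fun y => decide (x ≤ y)) := by
      conv_lhs => rw [← Multiset.sort_eq s (· ≤ ·)]
      exact Multiset.coe_countP _ _
    omega
  rw [hk]
  generalize s.sort (· ≤ ·) = l at *
  rw [List.getD_eq_getElem _ _ (by omega)]
  by_contra hlt
  push Not at hlt
  rw [← List.take_append_drop (k + 1) l, List.countP_append] at hcount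
  have h1 : (l.drop (k + 1)).countP (fun y => decide (x ≤ y)) ≤ k :=
    List.countP_le_length.trans (by simp; omega)
  have h2 : (l.take (k + 1)).countP (fun y => decide (x ≤ y)) = 0 := by
    rw [List.countP_eq_zero]
    intro y hy
    obtain ⟨j, hj, rfl⟩ := List.getElem_of_mem hy
    simp only [List.length_take] at hj
    simp only [List.getElem_take, decide_eq_true_eq, not_le]
    refine lt_of_le_of_lt ?_ hlt
    exact hsort.sortedLE.getElem_le_getElem_of_le (by omega)
  omega

theorem exists_top {X : Type*} [Fintype X] [Nonempty X] [I : LinearOrder X] (x : X) :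
    ∃ L : LinearOrder X, top L = x := by
  classical
  let m : X := Finset.univ.max' Finset.univ_nonempty
  let e : X ≃ X := Equiv.swap x m
  have he : e x = m := Equiv.swap_apply_left x m
  let L : LinearOrder X := LinearOrder.lift' e e.injective
  refine ⟨L, ?_⟩
  have h1 : L.le x (top L) := @Finset.le_max' X L Finset.univ x (Finset.mem_univ _)
  have h2 : ∀ y, L.le y x := by
    intro y
    change I.le (e y) (e x)
    rw [he]
    exact @Finset.le_max' X I _ _ (Finset.mem_univ _)
  exact L.le_antisymm _ _ (h2 _) h1

theorem scheme_card {n a b : ℕ} [Nonempty (Alt a b)]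
    (hn : 2 ≤ n) (α : Fin (n - 1) → Alt a b) (P : Profile n (Alt a b)) :
    (Multiset.map (fun i => top (P i)) Finset.univ.val +
      Multiset.map α Finset.univ.val).card = 2 * (n - 1) + 1 := by
  simp
  omega

theorem scheme_bounds {n a b : ℕ} [Nonempty (Alt a b)]
    (hn : 2 ≤ n)
    (α : Fin (n - 1) → Alt a b) (hmono : Monotone α)
    (i : Fin n) (t : Alt a b) (p q : Fin (n - 1))
    (hp : ∀ j, p ≤ j) (hq : ∀ j, j ≤ q) (P : Profile n (Alt a b)) (hP : top (P i) = t) :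
    (t ≤ medianScheme α P ∨ α p ≤ medianScheme α P) ∧
    (medianScheme α P ≤ t ∨ medianScheme α P ≤ α q) := by
  have hsub : ({t} : Multiset (Alt a b)) + Multiset.map α Finset.univ.val ≤
    Multiset.map (fun i => top (P i)) Finset.univ.val + Multiset.map α Finset.univ.val := by
    refine add_le_add ?_ le_rfl
    rw [Multiset.singleton_le, Multiset.mem_map]
    exact ⟨i, Finset.mem_univ_val _, hP⟩
  constructor
  · rw [← min_le_iff]
    refine le_med _ _ _ _ _ (scheme_card hn α P) hsub (by simp) ?_
    intro y hy
    rw [Multiset.mem_add, Multiset.mem_singleton, Multiset.mem_map] at hy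
    rcases hy with rfl | ⟨j, -, rfl⟩
    · exact min_le_left _ _
    · exact (min_le_right _ _).trans (hmono (hp j))
  · rw [← le_max_iff]
    refine med_le _ _ _ _ _ (scheme_card hn α P) hsub (by simp) ?_
    intro y hy
    rw [Multiset.mem_add, Multiset.mem_singleton, Multiset.mem_map] at hy
    rcases hy with rfl | ⟨j, -, rfl⟩
    · exact le_max_left _ _
    · exact (hmono (hq j)).trans (le_max_right _ _)

theorem scheme_attain {n a b : ℕ} [Nonempty (Alt a b)]
    (hn : 2 ≤ n) (α : Fin (n - 1) → Alt a b)
    (i : Fin n) (t x : Alt a b) (p q : Fin (n - 1))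
    (h1 : t ≤ x ∨ α p ≤ x) (h2 : x ≤ t ∨ x ≤ α q)
    (P : Profile n (Alt a b)) (hPi : top (P i) = t) (hPj : ∀ j, j ≠ i → top (P j) = x) :
    medianScheme α P = x := by
  have hcard := scheme_card hn α P
  have hsub : ∀ r, Multiset.map (fun i => top (P i)) (Finset.univ.erase i).val + {α r} ≤
    Multiset.map (fun i => top (P i)) Finset.univ.val + Multiset.map α Finset.univ.val := by
    intro r
    refine add_le_add (Multiset.map_le_map (Finset.val_le_iff.2 (Finset.erase_subset _ _))) ?_
    rw [Multiset.singleton_le, Multiset.mem_map]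
    exact ⟨r, Finset.mem_univ_val _, rfl⟩
  have hsub2 : Multiset.map (fun i => top (P i)) Finset.univ.val ≤
    Multiset.map (fun i => top (P i)) Finset.univ.val + Multiset.map α Finset.univ.val :=
    Multiset.le_add_right _ _
  have hc : ∀ r, n - 1 + 1 ≤
      (Multiset.map (fun i => top (P i)) (Finset.univ.erase i).val + {α r}).card := by
    intro r
    rw [Multiset.card_add, Multiset.card_map, Finset.card_val,
      Finset.card_erase_of_mem (Finset.mem_univ _)]
    simp
  have hc2 : n - 1 + 1 ≤ (Multiset.map (fun i => top (P i)) Finset.univ.val).card := by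
    simp; omega
  refine le_antisymm ?_ ?_
  · rcases h1 with h | h
    · refine med_le _ _ _ _ _ hcard hsub2 hc2 ?_
      intro y hy
      obtain ⟨j, -, rfl⟩ := Multiset.mem_map.1 hy
      by_cases hj : j = i
      · subst hj; rw [hPi]; exact h
      · exact (hPj j hj).le
    · refine med_le _ _ _ _ _ hcard (hsub p) (hc p) ?_
      intro y hy
      rw [Multiset.mem_add, Multiset.mem_singleton, Multiset.mem_map] at hy
      rcases hy with ⟨j, hj, rfl⟩ | rfl
      · exact (hPj j (Finset.ne_of_mem_erase (Eq.mp Finset.mem_val hj))).le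
      · exact h
  · rcases h2 with h | h
    · refine le_med _ _ _ _ _ hcard hsub2 hc2 ?_
      intro y hy
      obtain ⟨j, -, rfl⟩ := Multiset.mem_map.1 hy
      by_cases hj : j = i
      · subst hj; rw [hPi]; exact h
      · exact (hPj j hj).ge
    · refine le_med _ _ _ _ _ hcard (hsub q) (hc q) ?_
      intro y hy
      rw [Multiset.mem_add, Multiset.mem_singleton, Multiset.mem_map] at hy
      rcases hy with ⟨j, hj, rfl⟩ | rfl
      · exact (hPj j (Finset.ne_of_mem_erase (Eq.mp Finset.mem_val hj))).ge
      · exact h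

theorem ite_Icc_aux {a b : ℕ} (t c d : Alt a b) (h0 : c ≤ d) (S : Set (Alt a b))
    (hS : ∀ x, x ∈ S ↔ (t ≤ x ∨ c ≤ x) ∧ (x ≤ t ∨ x ≤ d)) :
    S = if t < c then Set.Icc t d else if t ≤ d then Set.Icc c d else Set.Icc c t := by
  have : S = Set.Icc (min t c) (max t d) := by
    ext x
    rw [hS, Set.mem_Icc, min_le_iff, le_max_iff]
  rw [this]
  split_ifs with h1 h2
  · rw [min_eq_left h1.le, max_eq_right (h1.le.trans h0)]
  · rw [min_eq_right (not_lt.1 h1), max_eq_right h2]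
  · rw [min_eq_right (not_lt.1 h1), max_eq_left (not_le.1 h2).le]

/-- Option sets of a median voter scheme: `[t(P_i), α_{n-1}]` if `t(P_i) < α_1`;
`[α_1, α_{n-1}]` if `α_1 ≤ t(P_i) ≤ α_{n-1}`; `[α_1, t(P_i)]` if `t(P_i) > α_{n-1}`. -/
theorem medianScheme_optionSet {n a b : ℕ} [Nonempty (Alt a b)]
    (hn : 2 ≤ n) (hab : a < b)
    (α : Fin (n - 1) → Alt a b) (hmono : Monotone α)
    (i : Fin n) (L : LinearOrder (Alt a b)) :
    OptionSet (medianScheme α) i L =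
      if top L < α ⟨0, by omega⟩ then
        Set.Icc (top L) (α ⟨n - 2, by omega⟩)
      else if top L ≤ α ⟨n - 2, by omega⟩ then
        Set.Icc (α ⟨0, by omega⟩) (α ⟨n - 2, by omega⟩)
      else Set.Icc (α ⟨0, by omega⟩) (top L) := by
  refine ite_Icc_aux (top L) _ _ (hmono (Fin.le_def.2 (Nat.zero_le _))) _ ?_
  intro x
  constructor
  · rintro ⟨P, hP, rfl⟩
    exact scheme_bounds hn α hmono i (top L) _ _
      (fun j => Fin.le_def.2 (Nat.zero_le _))
      (fun j => Fin.le_def.2 (by have := j.2; simp only; omega)) P (by rw [hP])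
  · rintro ⟨h1, h2⟩
    obtain ⟨M, hM⟩ := exists_top (I := Subtype.instLinearOrder _) x
    refine ⟨fun j => if j = i then L else M, by simp, ?_⟩
    exact scheme_attain hn α i (top L) x _ _ h1 h2 _ (by simp) (fun j hj => by simp [hj, hM])
end

section
/- A median voter scheme f^α on the universal domain over X = {a,...,b}, defined by fixed ballots α_1 ≤ ... ≤ α_{n-1}, is not obviously manipulable if and only if α_1 ∈ {a, a+1} and α_{n-1} ∈ {b−1, b}. -/
theorem le_medianOf {Y : Type*} [LinearOrder Y] (d : Y) (s : Multiset Y) (k : ℕ)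
    (hs : s.card = 2 * k + 1) (m : Y) (h : k + 1 ≤ s.countP (fun y => m ≤ y)) :
    m ≤ medianOf d s := by
  unfold medianOf
  have hk : s.card / 2 = k := by omega
  rw [hk]
  have hl : (s.sort (· ≤ ·)).length = 2 * k + 1 := by simp [hs]
  have hsort : (s.sort (· ≤ ·)).Pairwise (· ≤ ·) := Multiset.pairwise_sort s (· ≤ ·)
  have hc : s.countP (fun y => m ≤ y) = (s.sort (· ≤ ·)).countP (fun y => m ≤ y) := by
    conv_lhs => rw [← Multiset.sort_eq s (· ≤ ·)]
    exact Multiset.coe_countP _ _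
  rw [hc] at h
  generalize s.sort (· ≤ ·) = l at *
  rw [List.getD_eq_getElem _ _ (by omega)]
  by_contra hlt
  have h0 : (l.take (k+1)).countP (fun y => m ≤ y) = 0 := by
    rw [List.countP_eq_zero]
    intro y hy
    obtain ⟨j, hj, rfl⟩ := List.mem_take_iff_getElem.1 hy
    have : l[j] ≤ l[k] := by
      rcases Nat.lt_or_ge j k with hjk | hjk
      · exact List.pairwise_iff_getElem.1 hsort _ _ _ _ hjk
      · have : j = k := by omega
        subst this; exact le_rfl
    simp only [decide_eq_true_eq]
    exact fun h' => hlt (h'.trans this)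
  have h1 : (l.drop (k+1)).countP (fun y => m ≤ y) ≤ (l.drop (k+1)).length := List.countP_le_length
  rw [← List.take_append_drop (k+1) l, List.countP_append, h0] at h
  simp only [List.length_drop] at h1
  omega

theorem medianOf_le {Y : Type*} [LinearOrder Y] (d : Y) (s : Multiset Y) (k : ℕ)
    (hs : s.card = 2 * k + 1) (m : Y) (h : k + 1 ≤ s.countP (fun y => y ≤ m)) :
    medianOf d s ≤ m := by
  unfold medianOf
  have hk : s.card / 2 = k := by omega
  rw [hk]
  have hl : (s.sort (· ≤ ·)).length = 2 * k + 1 := by simp [hs]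
  have hsort : (s.sort (· ≤ ·)).Pairwise (· ≤ ·) := Multiset.pairwise_sort s (· ≤ ·)
  have hc : s.countP (fun y => y ≤ m) = (s.sort (· ≤ ·)).countP (fun y => y ≤ m) := by
    conv_lhs => rw [← Multiset.sort_eq s (· ≤ ·)]
    exact Multiset.coe_countP _ _
  rw [hc] at h
  generalize s.sort (· ≤ ·) = l at *
  rw [List.getD_eq_getElem _ _ (by omega)]
  by_contra hlt
  have h0 : (l.drop k).countP (fun y => y ≤ m) = 0 := by
    rw [List.countP_eq_zero]
    intro y hy
    obtain ⟨j, hj, rfl⟩ := List.mem_drop_iff_getElem.1 hy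
    have : l[k] ≤ l[k + j] := by
      rcases Nat.eq_zero_or_pos j with hjk | hjk
      · subst hjk; exact le_rfl
      · exact List.pairwise_iff_getElem.1 hsort _ _ _ _ (by omega)
    simp only [decide_eq_true_eq]
    exact fun h' => hlt (this.trans h')
  have h1 : (l.take k).countP (fun y => y ≤ m) ≤ (l.take k).length := List.countP_le_length
  rw [← List.take_append_drop k l, List.countP_append, h0] at h
  simp only [List.length_take] at h1
  omega

theorem countP_aux {Y : Type*} {k : ℕ} (g : Fin k → Y) (p : Y → Prop) [DecidablePred p] :
    Multiset.countP p (Multiset.map g Finset.univ.val)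
      = (Finset.univ.filter (fun i => p (g i))).card := by
  rw [Multiset.countP_map]; rfl

theorem count_ge {Y : Type*} {n : ℕ} (hn : 2 ≤ n) (g : Fin n → Y) (α : Fin (n-1) → Y)
    (p : Y → Prop) [DecidablePred p]
    (h : ((∃ i, p (g i)) ∧ ∀ j, p (α j)) ∨
      ∃ i, (∀ j, j ≠ i → p (g j)) ∧ (p (g i) ∨ ∃ j, p (α j))) :
    (n - 1) + 1 ≤ Multiset.countP p (Multiset.map g Finset.univ.val
      + Multiset.map α Finset.univ.val) := by
  rw [Multiset.countP_add, countP_aux, countP_aux]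
  rcases h with ⟨⟨i, hi⟩, h⟩ | ⟨i, h, h' | ⟨j, hj⟩⟩
  · rw [Finset.filter_true_of_mem (s := (Finset.univ : Finset (Fin (n-1)))) (fun j _ => h j)]
    have : 0 < (Finset.univ.filter (fun i => p (g i))).card :=
      Finset.card_pos.2 ⟨i, by simp [hi]⟩
    simp only [Finset.card_univ, Fintype.card_fin]
    omega
  · rw [Finset.filter_true_of_mem (s := (Finset.univ : Finset (Fin n)))]
    · simp only [Finset.card_univ, Fintype.card_fin]
      omega
    · intro j _
      by_cases hj : j = i
      · exact hj ▸ h'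
      · exact h j hj
  · have h1 : 0 < (Finset.univ.filter (fun i => p (α i))).card :=
      Finset.card_pos.2 ⟨j, by simp [hj]⟩
    have h2 : (Finset.univ.erase i).card ≤ (Finset.univ.filter (fun i => p (g i))).card := by
      apply Finset.card_le_card
      intro j hj
      simp at hj ⊢
      exact h j hj
    rw [Finset.card_erase_of_mem (Finset.mem_univ _)] at h2
    simp only [Finset.card_univ, Fintype.card_fin] at h2
    omega

theorem le_scheme {n a b : ℕ} [Nonempty (Alt a b)] (hn : 2 ≤ n) (α : Fin (n - 1) → Alt a b)
    (P : Profile n (Alt a b)) (m : Alt a b)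
    (h : ((∃ i, m ≤ top (P i)) ∧ ∀ j, m ≤ α j) ∨
      ∃ i, (∀ j, j ≠ i → m ≤ top (P j)) ∧ (m ≤ top (P i) ∨ ∃ j, m ≤ α j)) :
    m ≤ medianScheme α P :=
  le_medianOf _ _ (n-1) (by simp; omega) m
    (count_ge hn (fun i => top (P i)) α (fun y => m ≤ y) h)

theorem scheme_le {n a b : ℕ} [Nonempty (Alt a b)] (hn : 2 ≤ n) (α : Fin (n - 1) → Alt a b)
    (P : Profile n (Alt a b)) (m : Alt a b)
    (h : ((∃ i, top (P i) ≤ m) ∧ ∀ j, α j ≤ m) ∨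
      ∃ i, (∀ j, j ≠ i → top (P j) ≤ m) ∧ (top (P i) ≤ m ∨ ∃ j, α j ≤ m)) :
    medianScheme α P ≤ m :=
  medianOf_le _ _ (n-1) (by simp; omega) m
    (count_ge hn (fun i => top (P i)) α (fun y => y ≤ m) h)

theorem le_top' {X : Type*} [Fintype X] [Nonempty X] (L : LinearOrder X) (x : X) :
    L.le x (top L) := @Finset.le_max' X L Finset.univ x (Finset.mem_univ x)

theorem exists_pref {a b : ℕ} [Nonempty (Alt a b)] (t w : Alt a b) (htw : t ≠ w) :
    ∃ L : LinearOrder (Alt a b), top L = t ∧ ∀ x, x ≠ w → prefers L x w := by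
  let key : Alt a b → ℤ := fun x => if x = t then (b : ℤ) + 1 else if x = w then -1 else x.val
  have hkey : ∀ x, key x = if x = t then (b : ℤ) + 1 else if x = w then -1 else x.val :=
    fun _ => rfl
  have hb : ∀ x : Alt a b, x.val ≤ b := fun x => (Finset.mem_Icc.1 x.2).2
  have hinj : Function.Injective key := by
    intro x y hxy
    have := hb x
    have := hb y
    rw [hkey, hkey] at hxy
    split_ifs at hxy <;> first | (subst_vars; rfl) | omega | (apply Subtype.ext; omega)
  refine ⟨LinearOrder.lift' key hinj, ?_, ?_⟩
  · have h : key t ≤ key (top (LinearOrder.lift' key hinj)) := le_top' (LinearOrder.lift' key hinj) t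
    generalize top (LinearOrder.lift' key hinj) = z at *
    by_contra hz
    have := hb z
    rw [hkey, hkey, if_pos rfl, if_neg hz] at h
    split_ifs at h <;> omega
  · intro x hx
    change key w < key x
    have := hb x
    rw [hkey, hkey, if_neg htw.symm, if_pos rfl]
    split_ifs <;> omega

theorem exists_top_s7 {a b : ℕ} [Nonempty (Alt a b)] (hab : a < b) (t : Alt a b) :
    ∃ L : LinearOrder (Alt a b), top L = t := by
  have : ∃ w : Alt a b, t ≠ w := by
    by_cases h : t.val = a
    · exact ⟨⟨b, by simp; omega⟩, fun e => by rw [e] at h; simp at h; omega⟩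
    · exact ⟨⟨a, by simp; omega⟩, fun e => by rw [e] at h; simp at h⟩
  obtain ⟨w, hw⟩ := this
  obtain ⟨L, hL, _⟩ := exists_pref t w hw
  exact ⟨L, hL⟩

theorem mem_option {n a b : ℕ} [Nonempty (Alt a b)] (hn : 2 ≤ n) (hab : a < b)
    (α : Fin (n - 1) → Alt a b) (hmono : Monotone α) (z e : Fin (n - 1))
    (hz : z.val = 0) (he : e.val = n - 2) (i : Fin n) (L : LinearOrder (Alt a b))
    (x : Alt a b) :
    x ∈ OptionSet (medianScheme α) i L ↔
      (top L ≤ x ∨ α z ≤ x) ∧ (x ≤ top L ∨ x ≤ α e) := by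
  have h0 : ∀ j, α z ≤ α j := fun j => hmono (by simp only [Fin.le_def]; omega)
  have h1 : ∀ j, α j ≤ α e := fun j => hmono (by simp only [Fin.le_def]; omega)
  constructor
  · rintro ⟨P, rfl, rfl⟩
    constructor
    · rcases le_total (top (P i)) (α z) with h | h
      · exact Or.inl (le_scheme hn α P _ (Or.inl ⟨⟨i, le_rfl⟩, fun j => h.trans (h0 j)⟩))
      · exact Or.inr (le_scheme hn α P _ (Or.inl ⟨⟨i, h⟩, h0⟩))
    · rcases le_total (α e) (top (P i)) with h | h
      · exact Or.inl (scheme_le hn α P _ (Or.inl ⟨⟨i, le_rfl⟩, fun j => (h1 j).trans h⟩))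
      · exact Or.inr (scheme_le hn α P _ (Or.inl ⟨⟨i, h⟩, h1⟩))
  · rintro ⟨hl, hu⟩
    obtain ⟨Lx, hLx⟩ := exists_top_s7 hab x
    refine ⟨Function.update (fun _ => Lx) i L, by simp, ?_⟩
    apply le_antisymm
    · refine scheme_le hn α _ _ (Or.inr ⟨i, ?_, ?_⟩)
      · intro j hj
        rw [Function.update_of_ne hj, hLx]
      · rw [Function.update_self]
        exact hl.imp id (fun h => ⟨_, h⟩)
    · refine le_scheme hn α _ _ (Or.inr ⟨i, ?_, ?_⟩)
      · intro j hj
        rw [Function.update_of_ne hj, hLx]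
      · rw [Function.update_self]
        exact hu.imp id (fun h => ⟨_, h⟩)

theorem obv_of_worst {n : ℕ} {X : Type*} (f : Profile n X → X) (i : Fin n)
    (L L' : LinearOrder X) (h : WorstImproves f i L L') : IsObviousManip f i L L' := by
  refine ⟨?_, Or.inl h⟩
  obtain ⟨w, ⟨P, hP, rfl⟩, h⟩ := h
  exact ⟨P, hP, h _ ⟨_, by simp, rfl⟩⟩

theorem not_prefers_top {X : Type*} [Fintype X] [Nonempty X] (L : LinearOrder X) (x : X) :
    ¬ prefers L x (top L) := fun h => (@not_lt X L _ _).2 (le_top' L x) h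

/-- A median voter scheme on the universal domain is NOM iff `α_1 ∈ {a, a+1}` and
`α_{n-1} ∈ {b-1, b}`. -/
theorem medianScheme_NOM {n a b : ℕ} [Nonempty (Alt a b)]
    (hn : 2 ≤ n) (hab : a < b)
    (α : Fin (n - 1) → Alt a b) (hmono : Monotone α) :
    NOM (medianScheme α) ↔
      ((α ⟨0, by omega⟩).val = a ∨ (α ⟨0, by omega⟩).val = a + 1) ∧
      ((α ⟨n - 2, by omega⟩).val = b - 1 ∨ (α ⟨n - 2, by omega⟩).val = b) := by
  have ha : ∀ x : Alt a b, a ≤ x.val := fun x => (Finset.mem_Icc.1 x.2).1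
  have hb : ∀ x : Alt a b, x.val ≤ b := fun x => (Finset.mem_Icc.1 x.2).2
  have hmem := mem_option hn hab α hmono ⟨0, by omega⟩ ⟨n - 2, by omega⟩ rfl rfl
  have h01 : α ⟨0, by omega⟩ ≤ α ⟨n - 2, by omega⟩ := hmono (by simp [Fin.le_def])
  generalize α ⟨0, by omega⟩ = p at *
  generalize α ⟨n - 2, by omega⟩ = q at *
  have hpa := ha p
  have hpb := hb p
  have hqa := ha q
  have hqb := hb q
  have h01' : p.val ≤ q.val := h01
  have key : ∀ (t w t' : Alt a b), t ≠ w → ((t ≤ w ∨ p ≤ w) ∧ (w ≤ t ∨ w ≤ q)) →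
      ¬ ((t' ≤ w ∨ p ≤ w) ∧ (w ≤ t' ∨ w ≤ q)) → ¬ NOM (medianScheme α) := by
    intro t w t' htw hw hw' hN
    obtain ⟨L, hL, hLw⟩ := exists_pref t w htw
    obtain ⟨L', hL'⟩ := exists_top_s7 hab t'
    have i : Fin n := ⟨0, by omega⟩
    refine hN i L L' (obv_of_worst _ _ _ _ ⟨w, ?_, ?_⟩)
    · rw [hmem, hL]; exact hw
    · intro w' h'
      apply hLw
      rintro rfl
      rw [hmem, hL'] at h'
      exact hw' h'
  constructor
  · intro hN
    constructor
    · by_contra hc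
      refine key ⟨a, by simp; omega⟩ ⟨a+1, by simp; omega⟩ p (by simp) ?_ ?_ hN
      · simp only [← Subtype.coe_le_coe]; omega
      · simp only [← Subtype.coe_le_coe]; omega
    · by_contra hc
      refine key ⟨b, by simp; omega⟩ ⟨b-1, by simp; omega⟩ q (by simp; omega) ?_ ?_ hN
      · simp only [← Subtype.coe_le_coe]; omega
      · simp only [← Subtype.coe_le_coe]; omega
  · rintro ⟨h1, h2⟩ i L L' ⟨-, ⟨w, hw, hbad⟩ | ⟨b', hb', hbad⟩⟩
    · have hw' : w ∉ OptionSet (medianScheme α) i L' := fun h =>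
        @lt_irrefl _ L.toPreorder w (hbad w h)
      have hwt : w = top L := by
        rw [hmem] at hw hw'
        have := ha w
        have := hb w
        have := ha (top L)
        have := hb (top L)
        apply Subtype.ext
        simp only [← Subtype.coe_le_coe] at hw hw' h01
        omega
      subst hwt
      exact not_prefers_top L _ (hbad _ ⟨fun _ => L', rfl, rfl⟩)
    · refine not_prefers_top L _ (hbad (top L) ?_)
      rw [hmem]
      exact ⟨Or.inl le_rfl, Or.inl le_rfl⟩
end
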